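/- Fix an integer d ≥ 2, a unit vector ψ ∈ ℂ^d, and η ∈ [0,1], and set ρ := η|ψ⟩⟨ψ| + ((1−η)/d)·1_d. There exists a single-call deterministic superchannel S satisfying S ⋆ U = U† ρ U for every U ∈ SU(d) (deterministic and exact unitary inversion on the known mixed state ρ) if and only if η ≤ 2/(d²−1). -/

import Mathlib

open Matrix Kronecker BigOperators ComplexOrder

noncomputable section

/-- Entrywise complex conjugate `U̅` of a matrix. -/
def mconj {d : ℕ} (U : Matrix (Fin d) (Fin d) ℂ) : Matrix (Fin d) (Fin d) ℂ :=
  U.map (starRingEnd ℂ)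

/-- Rank-one outer product `|v⟩⟨v|`. -/
def outer {n : Type*} (v : n → ℂ) : Matrix n n ℂ :=
  Matrix.vecMulVec v (star v)

/-- Choi vector `|U⟩⟩ = Σ_i e_i ⊗ U e_i`. -/
def choiVec {d : ℕ} (U : Matrix (Fin d) (Fin d) ℂ) : Fin d × Fin d → ℂ :=
  fun p => U p.2 p.1

/-- `|U⟩⟩⟨⟨U|`. -/
def choiProj {d : ℕ} (U : Matrix (Fin d) (Fin d) ℂ) :
    Matrix (Fin d × Fin d) (Fin d × Fin d) ℂ :=
  outer (choiVec U)

/-- Partial trace over the first tensor factor. -/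
def ptrLeft {α β : Type*} [Fintype α] (S : Matrix (α × β) (α × β) ℂ) :
    Matrix β β ℂ :=
  fun b b' => ∑ a, S (a, b) (a, b')

/-- Partial trace over the second (last) tensor factor. -/
def ptrRight {α β : Type*} [Fintype β] (S : Matrix (α × β) (α × β) ℂ) :
    Matrix α α ℂ :=
  fun a a' => ∑ b, S (a, b) (a', b)

/-- Action `S ⋆ U := Tr_{IO}[ S · (|U̅⟩⟩⟨⟨U̅|_{IO} ⊗ 1_F) ]` of a single-call
supermap `S` on `I ⊗ O ⊗ F` applied to the unitary channel given by `U`. -/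
def act {d dF : ℕ}
    (S : Matrix ((Fin d × Fin d) × Fin dF) ((Fin d × Fin d) × Fin dF) ℂ)
    (U : Matrix (Fin d) (Fin d) ℂ) : Matrix (Fin dF) (Fin dF) ℂ :=
  ptrLeft (S * (choiProj (mconj U) ⊗ₖ (1 : Matrix (Fin dF) (Fin dF) ℂ)))

/-- A single-call deterministic superchannel (channels-to-states):
`S ≥ 0` with `Tr_F(S) = σ ⊗ 1_d`, `σ ≥ 0`, `Tr σ = 1`. -/
def IsSuperchannel {d dF : ℕ}
    (S : Matrix ((Fin d × Fin d) × Fin dF) ((Fin d × Fin d) × Fin dF) ℂ) : Prop :=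
  S.PosSemidef ∧
    ∃ σ : Matrix (Fin d) (Fin d) ℂ, σ.PosSemidef ∧ σ.trace = 1 ∧
      ptrRight S = σ ⊗ₖ (1 : Matrix (Fin d) (Fin d) ℂ)

def qf {d : ℕ} (M : Matrix (Fin d × Fin d) (Fin d × Fin d) ℂ)
    (A B : Matrix (Fin d) (Fin d) ℂ) : ℂ :=
  ∑ p, ∑ q, M p q * (A p.2 p.1 * starRingEnd ℂ (B q.2 q.1))

lemma qf_add_left {d : ℕ} (M : Matrix (Fin d × Fin d) (Fin d × Fin d) ℂ)
    (A A' B : Matrix (Fin d) (Fin d) ℂ) : qf M (A + A') B = qf M A B + qf M A' B := by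
  simp only [qf, ← Finset.sum_add_distrib, Matrix.add_apply]
  refine Finset.sum_congr rfl fun p _ => Finset.sum_congr rfl fun q _ => by ring

lemma qf_add_right {d : ℕ} (M : Matrix (Fin d × Fin d) (Fin d × Fin d) ℂ)
    (A B B' : Matrix (Fin d) (Fin d) ℂ) : qf M A (B + B') = qf M A B + qf M A B' := by
  simp only [qf, ← Finset.sum_add_distrib, Matrix.add_apply, map_add]
  refine Finset.sum_congr rfl fun p _ => Finset.sum_congr rfl fun q _ => by ring

lemma qf_smul_left {d : ℕ} (M : Matrix (Fin d × Fin d) (Fin d × Fin d) ℂ) (c : ℂ)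
    (A B : Matrix (Fin d) (Fin d) ℂ) : qf M (c • A) B = c * qf M A B := by
  simp only [qf, Finset.mul_sum, Matrix.smul_apply, smul_eq_mul]
  refine Finset.sum_congr rfl fun p _ => Finset.sum_congr rfl fun q _ => by ring

lemma qf_smul_right {d : ℕ} (M : Matrix (Fin d × Fin d) (Fin d × Fin d) ℂ) (c : ℂ)
    (A B : Matrix (Fin d) (Fin d) ℂ) : qf M A (c • B) = starRingEnd ℂ c * qf M A B := by
  simp only [qf, Finset.mul_sum, Matrix.smul_apply, smul_eq_mul, map_mul]
  refine Finset.sum_congr rfl fun p _ => Finset.sum_congr rfl fun q _ => by ring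

/-- from SU to U -/
lemma qf_unitary {d : ℕ} (hd : 2 ≤ d) (M : Matrix (Fin d × Fin d) (Fin d × Fin d) ℂ)
    (h : ∀ U ∈ Matrix.specialUnitaryGroup (Fin d) ℂ, qf M U U = 0)
    (U : Matrix (Fin d) (Fin d) ℂ) (hU : U ∈ Matrix.unitaryGroup (Fin d) ℂ) : qf M U U = 0 := by
  have hdet : ‖U.det‖ = 1 := by
    have := Matrix.det_of_mem_unitary hU
    exact CStarRing.norm_of_mem_unitary this
  have hdet0 : U.det ≠ 0 := by
    intro h0; rw [h0] at hdet; simp at hdet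
  obtain ⟨c, hc⟩ := IsAlgClosed.exists_pow_nat_eq (U.det)⁻¹ (show 0 < d by omega)
  have hcn : ‖c‖ = 1 := by
    have h1 : ‖c‖ ^ d = 1 := by rw [← norm_pow, hc, norm_inv, hdet, inv_one]
    exact (pow_eq_one_iff_of_nonneg (norm_nonneg _) (by omega)).1 h1
  have hcc : starRingEnd ℂ c * c = 1 := by
    rw [Complex.conj_mul', hcn]; simp
  have key := h (c • U) (by
    rw [Matrix.mem_specialUnitaryGroup_iff]
    constructor
    · rw [Matrix.mem_unitaryGroup_iff'] at hU ⊢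
      rw [star_smul, smul_mul_smul_comm, hU]
      change (starRingEnd ℂ c * c) • _ = _
      rw [hcc, one_smul]
    · rw [Matrix.det_smul, Fintype.card_fin, hc, inv_mul_cancel₀ hdet0])
  rw [qf_smul_left, qf_smul_right, ← mul_assoc, mul_comm c, hcc, one_mul] at key
  exact key

def rest {d : ℕ} (V W : Matrix (Fin d) (Fin d) ℂ) (a b : Fin d) : Matrix (Fin d) (Fin d) ℂ :=
  fun o i => ∑ k, if k = a ∨ k = b then 0 else V o k * starRingEnd ℂ (W i k)

lemma qf_signs {d : ℕ} (M : Matrix (Fin d × Fin d) (Fin d × Fin d) ℂ)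
    (h : ∀ U ∈ Matrix.unitaryGroup (Fin d) ℂ, qf M U U = 0)
    (V W : Matrix (Fin d) (Fin d) ℂ) (hV : V ∈ Matrix.unitaryGroup (Fin d) ℂ)
    (hW : W ∈ Matrix.unitaryGroup (Fin d) ℂ) (a b : Fin d) (hab : a ≠ b) :
    qf M (rest V W a b) (rest V W a b)
      + qf M (vecMulVec (V.col a) (star (W.col a))) (vecMulVec (V.col a) (star (W.col a)))
      + qf M (vecMulVec (V.col b) (star (W.col b))) (vecMulVec (V.col b) (star (W.col b))) = 0 := by
  set R := rest V W a b with hR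
  set A := vecMulVec (V.col a) (star (W.col a)) with hA
  set B := vecMulVec (V.col b) (star (W.col b)) with hB
  have key : ∀ s t : ℝ, s * s = 1 → t * t = 1 →
      qf M (R + (s : ℂ) • A + (t : ℂ) • B) (R + (s : ℂ) • A + (t : ℂ) • B) = 0 := by
    intro s t hs ht
    apply h
    have hs' : (s : ℂ) * s = 1 := by exact_mod_cast hs
    have ht' : (t : ℂ) * t = 1 := by exact_mod_cast ht
    have e : R + (s : ℂ) • A + (t : ℂ) • B =
        V * diagonal (fun k => if k = a then (s : ℂ) else if k = b then (t : ℂ) else 1) * star W := by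
      ext o i
      simp only [hR, hA, hB, rest, Matrix.add_apply, Matrix.smul_apply, vecMulVec_apply,
        smul_eq_mul, Matrix.col_apply, Pi.star_apply]
      rw [Matrix.mul_apply]
      simp only [Matrix.mul_diagonal, star_apply]
      have e1 : (s : ℂ) * (V o a * star (W i a)) =
        ∑ k, if k = a then (s : ℂ) * (V o k * star (W i k)) else 0 := by simp
      have e2 : (t : ℂ) * (V o b * star (W i b)) =
        ∑ k, if k = b then (t : ℂ) * (V o k * star (W i k)) else 0 := by simp
      rw [e1, e2, ← Finset.sum_add_distrib, ← Finset.sum_add_distrib]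
      refine Finset.sum_congr rfl fun k _ => ?_
      by_cases h1 : k = a
      · have h2 : k ≠ b := fun h => hab (h1.symm.trans h)
        simp [h1, hab]; ring
      · by_cases h2 : k = b
        · simp [h2, hab.symm]; ring
        · simp [h1, h2]
    rw [e]
    refine mul_mem (mul_mem hV ?_) (Unitary.star_mem hW)
    rw [Matrix.mem_unitaryGroup_iff, star_eq_conjTranspose, diagonal_conjTranspose,
      diagonal_mul_diagonal, ← diagonal_one]
    congr 1
    ext k
    simp only [Pi.star_apply]
    split_ifs <;> simp [hs', ht']
  have k1 := key 1 1 (by norm_num) (by norm_num)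
  have k2 := key 1 (-1) (by norm_num) (by norm_num)
  have k3 := key (-1) 1 (by norm_num) (by norm_num)
  have k4 := key (-1) (-1) (by norm_num) (by norm_num)
  simp only [qf_add_left, qf_add_right, qf_smul_left, qf_smul_right,
    Complex.ofReal_neg, Complex.ofReal_one, map_neg, map_one] at k1 k2 k3 k4
  linear_combination (1/4) * k1 + (1/4) * k2 + (1/4) * k3 + (1/4) * k4

lemma qf_exch {d : ℕ} (M : Matrix (Fin d × Fin d) (Fin d × Fin d) ℂ)
    (h : ∀ U ∈ Matrix.unitaryGroup (Fin d) ℂ, qf M U U = 0)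
    (V W : Matrix (Fin d) (Fin d) ℂ) (hV : V ∈ Matrix.unitaryGroup (Fin d) ℂ)
    (hW : W ∈ Matrix.unitaryGroup (Fin d) ℂ) (a b : Fin d) (hab : a ≠ b) :
    qf M (vecMulVec (V.col a) (star (W.col a))) (vecMulVec (V.col a) (star (W.col a)))
      + qf M (vecMulVec (V.col b) (star (W.col b))) (vecMulVec (V.col b) (star (W.col b))) =
    qf M (vecMulVec (V.col a) (star (W.col b))) (vecMulVec (V.col a) (star (W.col b)))
      + qf M (vecMulVec (V.col b) (star (W.col a))) (vecMulVec (V.col b) (star (W.col a))) := by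
  have h1 := qf_signs M h V W hV hW a b hab
  have hW' : W.submatrix id (Equiv.swap a b) ∈ Matrix.unitaryGroup (Fin d) ℂ := by
    rw [Matrix.mem_unitaryGroup_iff] at hW ⊢
    rw [star_eq_conjTranspose, conjTranspose_submatrix, submatrix_mul_equiv, 
      ← star_eq_conjTranspose, hW, submatrix_id_id]
  have h2 := qf_signs M h V _ hV hW' a b hab
  have c1 : (W.submatrix id (Equiv.swap a b)).col a = W.col b := by
    ext; simp
  have c2 : (W.submatrix id (Equiv.swap a b)).col b = W.col a := by
    ext; simp
  have c3 : rest V (W.submatrix id (Equiv.swap a b)) a b = rest V W a b := by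
    ext o i
    simp only [rest]
    refine Finset.sum_congr rfl fun k _ => ?_
    split_ifs with hk
    · rfl
    · push Not at hk
      simp [Equiv.swap_apply_of_ne_of_ne hk.1 hk.2]
  rw [c1, c2, c3] at h2
  linear_combination h1 - h2

lemma ext_set {d : ℕ} (s : Set (Fin d)) (v : Fin d → Fin d → ℂ)
    (hv : ∀ i ∈ s, ∀ j ∈ s, star (v i) ⬝ᵥ v j = if i = j then 1 else 0) :
    ∃ V ∈ Matrix.unitaryGroup (Fin d) ℂ, ∀ i ∈ s, V.col i = v i := by
  obtain ⟨b, hb⟩ := Orthonormal.exists_orthonormalBasis_extension_of_card_eq (𝕜 := ℂ)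
    (E := EuclideanSpace ℂ (Fin d)) (ι := Fin d) (by simp)
    (v := fun i => WithLp.toLp 2 (v i)) (s := s) (by
      rw [orthonormal_iff_ite]
      rintro ⟨i, hi⟩ ⟨j, hj⟩
      have := hv i hi j hj
      simp only [Set.domRestrict_apply, EuclideanSpace.inner_toLp_toLp, Subtype.mk.injEq]
      rw [dotProduct_comm, this])
  refine ⟨Matrix.of (fun o i => b i o), ?_, ?_⟩
  · rw [Matrix.mem_unitaryGroup_iff']
    ext i j
    have := (orthonormal_iff_ite.1 b.orthonormal) i j
    rw [Matrix.one_apply, ← this, EuclideanSpace.inner_eq_star_dotProduct, dotProduct_comm]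
    simp [Matrix.mul_apply, dotProduct, star_apply]
  · intro i hi
    ext o
    simp [Matrix.col_apply, hb i hi]

lemma ext_pair {d : ℕ} (a b : Fin d) (hab : a ≠ b) (x y : Fin d → ℂ)
    (hx : star x ⬝ᵥ x = 1) (hy : star y ⬝ᵥ y = 1) (hxy : star x ⬝ᵥ y = 0) :
    ∃ V ∈ Matrix.unitaryGroup (Fin d) ℂ, V.col a = x ∧ V.col b = y := by
  have hyx : star y ⬝ᵥ x = 0 := by
    have := congrArg star hxy
    rw [star_dotProduct, star_zero, star_star] at this
    rw [dotProduct_comm] at this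
    rw [← this, dotProduct_comm]
  obtain ⟨V, hV, h⟩ := ext_set {a, b} (fun k => if k = a then x else y) (by
    rintro i (rfl | rfl) j (rfl | rfl) <;> simp [hx, hy, hxy, hyx, hab, hab.symm])
  refine ⟨V, hV, ?_, ?_⟩
  · rw [h a (by simp)]; simp
  · rw [h b (by simp)]; simp [hab.symm]

def gm {d : ℕ} (M : Matrix (Fin d × Fin d) (Fin d × Fin d) ℂ) (v : Fin d → ℂ) :
    Matrix (Fin d) (Fin d) ℂ :=
  Matrix.of fun i i' => ∑ o, ∑ o', M (i, o) (i', o') * (v o * starRingEnd ℂ (v o'))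

lemma qf_rk {d : ℕ} (M : Matrix (Fin d × Fin d) (Fin d × Fin d) ℂ) (v x : Fin d → ℂ) :
    qf M (vecMulVec v (star x)) (vecMulVec v (star x)) = star x ⬝ᵥ (gm M v *ᵥ x) := by
  simp only [qf, gm, Fintype.sum_prod_type, dotProduct, mulVec, Finset.mul_sum, Finset.sum_mul,
    vecMulVec_apply, Pi.star_apply, Matrix.of_apply]
  refine Finset.sum_congr rfl fun i _ => ?_
  rw [Finset.sum_comm]
  refine Finset.sum_congr rfl fun i' _ => ?_
  refine Finset.sum_congr rfl fun o _ => Finset.sum_congr rfl fun o' _ => ?_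
  simp
  ring

lemma gm_exch {d : ℕ} (M : Matrix (Fin d × Fin d) (Fin d × Fin d) ℂ)
    (h : ∀ U ∈ Matrix.unitaryGroup (Fin d) ℂ, qf M U U = 0) (a b : Fin d) (hab : a ≠ b)
    (ψ φ x y : Fin d → ℂ)
    (hψ : star ψ ⬝ᵥ ψ = 1) (hφ : star φ ⬝ᵥ φ = 1) (hψφ : star ψ ⬝ᵥ φ = 0)
    (hx : star x ⬝ᵥ x = 1) (hy : star y ⬝ᵥ y = 1) (hxy : star x ⬝ᵥ y = 0) :
    star x ⬝ᵥ ((gm M ψ - gm M φ) *ᵥ x) = star y ⬝ᵥ ((gm M ψ - gm M φ) *ᵥ y) := by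
  obtain ⟨V, hV, rfl, rfl⟩ := ext_pair a b hab ψ φ hψ hφ hψφ
  obtain ⟨W, hW, rfl, rfl⟩ := ext_pair a b hab x y hx hy hxy
  have := qf_exch M h V W hV hW a b hab
  simp only [qf_rk] at this
  simp only [sub_mulVec, dotProduct_sub]
  linear_combination this

lemma two_dot {d : ℕ} (i j : Fin d) (hij : i ≠ j) (p q r s : ℂ) :
    star (Pi.single i p + Pi.single j q : Fin d → ℂ) ⬝ᵥ (Pi.single i r + Pi.single j s)
      = starRingEnd ℂ p * r + starRingEnd ℂ q * s := by
  simp [dotProduct_add, hij, hij.symm]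

lemma two_quad {d : ℕ} (N : Matrix (Fin d) (Fin d) ℂ) (i j : Fin d) (p q : ℂ) :
    star (Pi.single i p + Pi.single j q : Fin d → ℂ) ⬝ᵥ (N *ᵥ (Pi.single i p + Pi.single j q))
      = starRingEnd ℂ p * (N i i * p + N i j * q) + starRingEnd ℂ q * (N j i * p + N j j * q) := by
  simp only [mulVec_add, mulVec_single, star_add, add_dotProduct, ← Pi.single_star, 
    single_dotProduct]
  simp
  ring

lemma const_mat {d : ℕ} (N : Matrix (Fin d) (Fin d) ℂ)
    (h : ∀ x y : Fin d → ℂ, star x ⬝ᵥ x = 1 → star y ⬝ᵥ y = 1 → star x ⬝ᵥ y = 0 →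
      star x ⬝ᵥ (N *ᵥ x) = star y ⬝ᵥ (N *ᵥ y)) (i j : Fin d) (hij : i ≠ j) :
    N i i = N j j ∧ N i j = 0 := by
  have key : ∀ p q r s : ℂ, starRingEnd ℂ p * p + starRingEnd ℂ q * q = 1 →
      starRingEnd ℂ r * r + starRingEnd ℂ s * s = 1 →
      starRingEnd ℂ p * r + starRingEnd ℂ q * s = 0 →
      starRingEnd ℂ p * (N i i * p + N i j * q) + starRingEnd ℂ q * (N j i * p + N j j * q) =
      starRingEnd ℂ r * (N i i * r + N i j * s) + starRingEnd ℂ s * (N j i * r + N j j * s) := by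
    intro p q r s h1 h2 h3
    have := h (Pi.single i p + Pi.single j q) (Pi.single i r + Pi.single j s)
      (by rw [two_dot i j hij, h1]) (by rw [two_dot i j hij, h2]) (by rw [two_dot i j hij, h3])
    rwa [two_quad, two_quad] at this
  have k1 := key 1 0 0 1 (by simp) (by simp) (by simp)
  have e3 : starRingEnd ℂ (3/5 : ℂ) = 3/5 := by
    have := Complex.conj_ofReal (3/5)
    push_cast at this
    exact this
  have e4 : starRingEnd ℂ (4/5 : ℂ) = 4/5 := by
    have := Complex.conj_ofReal (4/5)
    push_cast at this
    exact this
  have k2 := key (3/5) (4/5) (4/5) (-(3/5)) (by rw [e3, e4]; norm_num)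
    (by rw [map_neg, e3, e4]; norm_num) (by rw [e3, e4]; norm_num)
  have k3 := key (3/5) (Complex.I * (4/5)) (4/5) (-(Complex.I * (3/5)))
    (by rw [map_mul, e3, e4, Complex.conj_I]; linear_combination -(4/5 * (4/5)) * Complex.I_mul_I)
    (by rw [map_neg, map_mul, e3, e4, Complex.conj_I]; linear_combination -(3/5 * (3/5)) * Complex.I_mul_I)
    (by rw [map_mul, e3, e4, Complex.conj_I]; linear_combination (4/5 * (3/5)) * Complex.I_mul_I)
  simp only [map_neg, map_mul, e3, e4, Complex.conj_I, map_one, map_zero] at k1 k2 k3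
  have k1' : N i i = N j j := by linear_combination k1
  refine ⟨k1', ?_⟩
  have a1 : N i j + N j i = 0 := by linear_combination (25/24) * k2 + (7/24) * k1'
  have a2 : Complex.I * (N i j - N j i) = 0 := by
    linear_combination (25/24) * k3 + (7/24) * k1' + (7/24) * N j j * Complex.I_mul_I 
  have a3 : N i j - N j i = 0 := by
    rcases mul_eq_zero.1 a2 with h | h
    · exact absurd h Complex.I_ne_zero
    · exact h
  linear_combination (1/2) * a1 + (1/2) * a3

lemma act_apply {d : ℕ} 
    (S : Matrix ((Fin d × Fin d) × Fin d) ((Fin d × Fin d) × Fin d) ℂ)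
    (U : Matrix (Fin d) (Fin d) ℂ) (f f' : Fin d) :
    act S U f f' = ∑ p, ∑ q, S (p, f) (q, f') * (U p.2 p.1 * starRingEnd ℂ (U q.2 q.1)) := by
  simp only [act, ptrLeft]
  refine Finset.sum_congr rfl fun p _ => ?_
  rw [Matrix.mul_apply, Fintype.sum_prod_type]
  refine Finset.sum_congr rfl fun q _ => ?_
  simp [kroneckerMap_apply, Matrix.one_apply, choiProj, outer, choiVec, mconj, vecMulVec_apply]
  left; ring

def Mff {d : ℕ} (S : Matrix ((Fin d × Fin d) × Fin d) ((Fin d × Fin d) × Fin d) ℂ)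
    (ρ : Matrix (Fin d) (Fin d) ℂ) (f f' : Fin d) : Matrix (Fin d × Fin d) (Fin d × Fin d) ℂ :=
  Matrix.of fun p q => S (p, f) (q, f') - if p.1 = f' then (if q.1 = f then ρ q.2 p.2 else 0) else 0

lemma qf_Mff {d : ℕ} (S : Matrix ((Fin d × Fin d) × Fin d) ((Fin d × Fin d) × Fin d) ℂ)
    (ρ U : Matrix (Fin d) (Fin d) ℂ) (f f' : Fin d) :
    qf (Mff S ρ f f') U U = act S U f f' - (Uᴴ * ρ * U) f f' := by
  rw [act_apply]
  simp only [qf, Mff, Matrix.of_apply, sub_mul, Finset.sum_sub_distrib]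
  congr 1
  simp only [Fintype.sum_prod_type, ite_mul, zero_mul, Finset.sum_ite_irrel, Finset.sum_const_zero,
    Finset.sum_ite_eq', Finset.mem_univ, if_true, Matrix.mul_apply, conjTranspose_apply,
    Finset.sum_mul]
  refine Finset.sum_congr rfl fun o _ => Finset.sum_congr rfl fun o' _ => ?_
  simp
  ring

lemma gm_Mff {d : ℕ} (S : Matrix ((Fin d × Fin d) × Fin d) ((Fin d × Fin d) × Fin d) ℂ)
    (ρ : Matrix (Fin d) (Fin d) ℂ) (v : Fin d → ℂ) (f f' i i' : Fin d) :
    gm (Mff S ρ f f') v i i' = (∑ o, ∑ o', S ((i, o), f) ((i', o'), f') * (v o * starRingEnd ℂ (v o')))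
      - if i = f' then (if i' = f then star v ⬝ᵥ (ρ *ᵥ v) else 0) else 0 := by
  simp only [gm, Mff, Matrix.of_apply, sub_mul, Finset.sum_sub_distrib]
  congr 1
  simp only [ite_mul, zero_mul, Finset.sum_ite_irrel, Finset.sum_const_zero]
  congr 2
  simp only [dotProduct, mulVec, Finset.mul_sum]
  rw [Finset.sum_comm]
  refine Finset.sum_congr rfl fun o _ => Finset.sum_congr rfl fun o' _ => ?_
  simp
  ring

def gs {d : ℕ} (S : Matrix ((Fin d × Fin d) × Fin d) ((Fin d × Fin d) × Fin d) ℂ)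
    (v : Fin d → ℂ) (i f i' f' : Fin d) : ℂ :=
  ∑ o, ∑ o', S ((i, o), f) ((i', o'), f') * (v o * starRingEnd ℂ (v o'))

/-- Trace normalisation. -/
lemma gs_trace {d : ℕ} (S : Matrix ((Fin d × Fin d) × Fin d) ((Fin d × Fin d) × Fin d) ℂ)
    (σ : Matrix (Fin d) (Fin d) ℂ) (hσ : σ.trace = 1)
    (h : ptrRight S = σ ⊗ₖ (1 : Matrix (Fin d) (Fin d) ℂ))
    (v : Fin d → ℂ) (hv : star v ⬝ᵥ v = 1) : ∑ i, ∑ f, gs S v i f i f = 1 := by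
  have h1 : ∀ i, ∑ f, gs S v i f i f = σ i i := by
    intro i
    have h2 : ∀ o o', ∑ f, S ((i, o), f) ((i, o'), f) = σ i i * (if o = o' then 1 else 0) := by
      intro o o'
      have := congrFun (congrFun h (i, o)) (i, o')
      simpa [ptrRight, kroneckerMap_apply, Matrix.one_apply] using this
    simp only [gs]
    rw [Finset.sum_comm]
    have h3 : ∀ o, ∑ f, ∑ o', S ((i, o), f) ((i, o'), f) * (v o * starRingEnd ℂ (v o'))
        = σ i i * (v o * starRingEnd ℂ (v o)) := by
      intro o
      rw [Finset.sum_comm]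
      simp only [← Finset.sum_mul, h2]
      simp
    simp only [h3, ← Finset.mul_sum]
    have h4 : ∑ o, v o * starRingEnd ℂ (v o) = 1 := by
      rw [← hv]
      simp [dotProduct, mul_comm]
    rw [h4, mul_one]
  simp only [h1]
  exact hσ

lemma gs_pos {d : ℕ} (S : Matrix ((Fin d × Fin d) × Fin d) ((Fin d × Fin d) × Fin d) ℂ)
    (hS : S.PosSemidef) (v : Fin d → ℂ) (i f : Fin d) (s : ℝ) :
    0 ≤ gs S v i f i f + s * gs S v i f f i + s * gs S v f i i f + s * s * gs S v f i f i := by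
  let w (i f : Fin d) : (Fin d × Fin d) × Fin d → ℂ :=
    fun p => if p.1.1 = i then (if p.2 = f then starRingEnd ℂ (v p.1.2) else 0) else 0
  have hw : ∀ i f i' f', star (w i f) ⬝ᵥ (S *ᵥ (w i' f')) = gs S v i f i' f' := by
    intro i f i' f'
    simp only [dotProduct, mulVec, w, gs, Fintype.sum_prod_type, Pi.star_apply, apply_ite star,
      star_zero, ite_mul, zero_mul, mul_ite, mul_zero, Finset.sum_ite_irrel, Finset.sum_const_zero,
      Finset.sum_ite_eq', Finset.mem_univ, if_true, Finset.mul_sum]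
    refine Finset.sum_congr rfl fun o _ => Finset.sum_congr rfl fun o' _ => ?_
    simp
    ring
  have := hS.dotProduct_mulVec_nonneg (w i f + (s : ℂ) • w f i)
  simp only [star_add, star_smul, mulVec_add, mulVec_smul, dotProduct_add, add_dotProduct,
    smul_dotProduct, dotProduct_smul, hw, smul_eq_mul] at this
  convert this using 1
  simp
  ring

lemma gs_sum_pos {d : ℕ} (S : Matrix ((Fin d × Fin d) × Fin d) ((Fin d × Fin d) × Fin d) ℂ)
    (hS : S.PosSemidef) (v : Fin d → ℂ) (h1 : ∑ i, ∑ f, gs S v i f i f = 1) (s : ℝ)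
    (hs : s * s = 1) :
    0 ≤ 1 + s * (∑ i, ∑ f, gs S v i f f i).re := by
  have h : 0 ≤ ∑ i, ∑ f, (gs S v i f i f + s * gs S v i f f i + s * gs S v f i i f
      + s * s * gs S v f i f i) :=
    Finset.sum_nonneg fun i _ => Finset.sum_nonneg fun f _ => gs_pos S hS v i f s
  simp only [Finset.sum_add_distrib, ← Finset.mul_sum] at h
  have e1 : ∑ i, ∑ f, gs S v f i f i = 1 := by rw [Finset.sum_comm, h1]
  have e2 : ∑ i, ∑ f, gs S v f i i f = ∑ i, ∑ f, gs S v i f f i := by rw [Finset.sum_comm]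
  have hs' : (s : ℂ) * s = 1 := by exact_mod_cast hs
  rw [e1, e2, h1, hs'] at h
  have := (Complex.le_def.1 h).1
  simp at this
  simp only [Complex.re_sum] at this ⊢
  linarith

lemma necessity (d : ℕ) (hd : 2 ≤ d) (ψ : Fin d → ℂ) (hψ : star ψ ⬝ᵥ ψ = 1)
    (η : ℝ) (c : ℂ) (S : Matrix ((Fin d × Fin d) × Fin d) ((Fin d × Fin d) × Fin d) ℂ)
    (hS : IsSuperchannel S)
    (h : ∀ U : Matrix (Fin d) (Fin d) ℂ, U ∈ Matrix.specialUnitaryGroup (Fin d) ℂ →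
          act S U = Uᴴ * ((η : ℂ) • outer ψ + c • (1 : Matrix (Fin d) (Fin d) ℂ)) * U) :
    η * ((d : ℝ) ^ 2 - 1) ≤ 2 := by
  obtain ⟨hpos, σ, -, htr, hF⟩ := hS
  set ρ := (η : ℂ) • outer ψ + c • (1 : Matrix (Fin d) (Fin d) ℂ) with hρ
  let a : Fin d := ⟨0, by omega⟩
  let b : Fin d := ⟨1, by omega⟩
  have hab : a ≠ b := by simp [a, b]
  obtain ⟨φ, hφ, hψφ⟩ : ∃ φ : Fin d → ℂ, star φ ⬝ᵥ φ = 1 ∧ star ψ ⬝ᵥ φ = 0 := by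
    obtain ⟨V, hV, hVa⟩ := ext_set {a} (fun _ => ψ) (by
      rintro i rfl j rfl; simp [hψ])
    rw [Matrix.mem_unitaryGroup_iff'] at hV
    refine ⟨V.col b, ?_, ?_⟩
    · have := congrFun (congrFun hV b) b
      simpa [Matrix.mul_apply, dotProduct] using this
    · have := congrFun (congrFun hV a) b
      rw [← hVa a rfl]
      simpa [Matrix.mul_apply, dotProduct, hab] using this
  have hφψ : star ψ ⬝ᵥ φ = 0 := hψφ
  have rψ : star ψ ⬝ᵥ (ρ *ᵥ ψ) = η + c := by
    simp [hρ, outer, add_mulVec, smul_mulVec, vecMulVec_mulVec, dotProduct_add, hψ]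
  have rφ : star φ ⬝ᵥ (ρ *ᵥ φ) = c := by
    simp [hρ, outer, add_mulVec, smul_mulVec, vecMulVec_mulVec, dotProduct_add, hφ, hψφ]
  let N (f f' : Fin d) := gm (Mff S ρ f f') ψ - gm (Mff S ρ f f') φ
  have hN : ∀ f f' i j, i ≠ j → N f f' i i = N f f' j j ∧ N f f' i j = 0 := by
    intro f f' i j hij
    refine const_mat (N f f') (fun x y hx hy hxy => ?_) i j hij
    refine gm_exch _ (qf_unitary hd _ fun U hU => ?_) a b hab ψ φ x y hψ hφ hψφ hx hy hxy
    rw [qf_Mff, h U hU, sub_self]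
  have Nval : ∀ f f' i i', N f f' i i' = gs S ψ i f i' f' - gs S φ i f i' f'
      - if i = f' then (if i' = f then (η : ℂ) else 0) else 0 := by
    intro f f' i i'
    simp only [N, Matrix.sub_apply, gm_Mff, rψ, rφ, gs]
    split_ifs <;> ring
  have tψ := gs_trace S σ htr hF ψ hψ
  have tφ := gs_trace S σ htr hF φ hφ
  have s1 : ∑ i, ∑ f, N f i i f = ∑ f, N f f f f := by
    refine Finset.sum_congr rfl fun i _ => ?_
    rw [Finset.sum_eq_single i]
    · intro f _ hf; exact (hN f i i f hf.symm).2
    · simp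
  have s2 : ∑ i, ∑ f, N f f i i = d * ∑ f, N f f f f := by
    have : ∀ i : Fin d, ∑ f, N f f i i = ∑ f, N f f f f := by
      intro i
      refine Finset.sum_congr rfl fun f _ => ?_
      by_cases hif : i = f
      · rw [hif]
      · exact (hN f f i f hif).1
    simp [this]
  have s3 : ∑ i, ∑ f, N f f i i = - (d * η) := by
    simp only [Nval, Finset.sum_sub_distrib, tψ, tφ]
    simp
  have s4 : ∑ i, ∑ f, N f i i f = ∑ i, ∑ f, gs S ψ i f f i - ∑ i, ∑ f, gs S φ i f f i
      - d * (d * η) := by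
    simp only [Nval, Finset.sum_sub_distrib]
    simp
  have hd0 : (d : ℂ) ≠ 0 := by
    have : d ≠ 0 := by omega
    exact_mod_cast this
  have s5 : ∑ f, N f f f f = -(η : ℂ) := by
    apply mul_left_cancel₀ hd0
    rw [← s2, s3]; ring
  have s6 : ∑ i, ∑ f, gs S ψ i f f i - ∑ i, ∑ f, gs S φ i f f i = ((η * ((d : ℝ)^2 - 1) : ℝ) : ℂ) := by
    push_cast
    linear_combination s1 + s5 - s4
  have s7 := congrArg Complex.re s6
  rw [Complex.sub_re, Complex.ofReal_re] at s7
  have p1 := gs_sum_pos S hpos ψ tψ (-1) (by norm_num)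
  have p2 := gs_sum_pos S hpos φ tφ 1 (by norm_num)
  linarith

def sXZ {d : ℕ} (X Z : Matrix (Fin d) (Fin d) ℂ) :
    Matrix ((Fin d × Fin d) × Fin d) ((Fin d × Fin d) × Fin d) ℂ :=
  Matrix.of fun p q => (if p.1.1 = q.1.1 then (if p.2 = q.2 then X p.1.2 q.1.2 else 0) else 0)
    + (if p.1.1 = q.2 then (if q.1.1 = p.2 then Z p.1.2 q.1.2 else 0) else 0)

lemma act_sXZ {d : ℕ} (X Z U : Matrix (Fin d) (Fin d) ℂ) (hU : U * Uᴴ = 1) :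
    act (sXZ X Z) U = X.trace • (1 : Matrix (Fin d) (Fin d) ℂ) + Uᴴ * Zᵀ * U := by
  ext f f'
  rw [act_apply]
  simp only [sXZ, Matrix.of_apply, add_mul, Finset.sum_add_distrib, Matrix.add_apply]
  congr 1
  · simp only [Fintype.sum_prod_type, ite_mul, zero_mul, Finset.sum_ite_irrel,
      Finset.sum_const_zero, Finset.sum_ite_eq', Finset.sum_ite_eq, Finset.mem_univ, if_true,
      Matrix.smul_apply, Matrix.one_apply, smul_eq_mul, mul_ite, mul_one, mul_zero]
    congr 1
    rw [Finset.sum_comm]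
    simp only [Matrix.trace, Matrix.diag_apply]
    refine Finset.sum_congr rfl fun o _ => ?_
    rw [Finset.sum_comm]
    have h2 : ∀ o', ∑ i, U o i * starRingEnd ℂ (U o' i) = if o = o' then 1 else 0 := by
      intro o'
      have := congrFun (congrFun hU o) o'
      simpa [Matrix.mul_apply, Matrix.one_apply] using this
    simp only [← Finset.mul_sum, h2]
    simp
  · simp only [Fintype.sum_prod_type, ite_mul, zero_mul, Finset.sum_ite_irrel, Finset.sum_const_zero,
      Finset.sum_ite_eq', Finset.mem_univ, if_true, Matrix.mul_apply, conjTranspose_apply,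
      Finset.sum_mul, transpose_apply]
    refine Finset.sum_congr rfl fun o _ => Finset.sum_congr rfl fun o' _ => ?_
    simp
    ring

lemma ptr_sXZ {d : ℕ} (X Z : Matrix (Fin d) (Fin d) ℂ) :
    ptrRight (sXZ X Z) = (1 : Matrix (Fin d) (Fin d) ℂ) ⊗ₖ ((d : ℂ) • X + Z) := by
  ext ⟨i, o⟩ ⟨i', o'⟩
  simp only [ptrRight, sXZ, Matrix.of_apply, Finset.sum_add_distrib, kroneckerMap_apply,
    Matrix.one_apply, Matrix.add_apply, Matrix.smul_apply, smul_eq_mul]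
  by_cases h : i = i'
  · subst h; simp
  · have h' : ¬ i' = i := fun e => h e.symm
    simp [h, h']

def pm (d : ℕ) (s : ℝ) : Matrix (Fin d × Fin d) (Fin d × Fin d) ℂ :=
  (2⁻¹ : ℂ) • (1 + (s : ℂ) • (1 : Matrix (Fin d × Fin d) (Fin d × Fin d) ℂ).submatrix Prod.swap id)

lemma pm_pos (d : ℕ) (s : ℝ) (hs : s * s = 1) : (pm d s).PosSemidef := by
  have hs' : (s : ℂ) * s = 1 := by exact_mod_cast hs
  set K := (1 : Matrix (Fin d × Fin d) (Fin d × Fin d) ℂ).submatrix Prod.swap id with hK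
  have hKH : Kᴴ = K := by
    ext ⟨i, f⟩ ⟨i', f'⟩
    simp only [hK, conjTranspose_apply, submatrix_apply, Matrix.one_apply, id, Prod.swap,
      Prod.mk.injEq]
    by_cases h1 : i = f' <;> by_cases h2 : f = i' <;> simp [h1, h2, eq_comm]
  have hKK : K * K = 1 := by
    ext ⟨i, f⟩ ⟨i', f'⟩
    rw [Matrix.mul_apply, Finset.sum_eq_single (f, i)]
    · simp [hK, Matrix.one_apply, Prod.swap]
    · intro q _ hq
      simp [hK, Matrix.one_apply, Prod.swap, hq.symm]
    · simp
  have hH : (pm d s)ᴴ = pm d s := by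
    simp only [pm, ← hK, conjTranspose_smul, conjTranspose_add, conjTranspose_one, hKH]
    simp
  have h2 : (pm d s)ᴴ * pm d s = pm d s := by
    rw [hH]
    simp only [pm, ← hK, smul_mul_smul_comm, add_mul, mul_add, mul_one, one_mul, hKK, hs']
    module
  rw [← h2]
  exact posSemidef_conjTranspose_mul_self _

lemma sXZ_pos {d : ℕ} (A B : Matrix (Fin d) (Fin d) ℂ) (hA : A.PosSemidef) (hB : B.PosSemidef) :
    (sXZ ((2⁻¹ : ℂ) • (A + B)) ((2⁻¹ : ℂ) • (A - B))).PosSemidef := by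
  let e : (Fin d × Fin d) × Fin d → (Fin d × Fin d) × Fin d := fun p => ((p.1.1, p.2), p.1.2)
  have h := (((pm_pos d 1 (by norm_num)).kronecker hA).submatrix e).add
    (((pm_pos d (-1) (by norm_num)).kronecker hB).submatrix e)
  suffices hE : sXZ ((2⁻¹ : ℂ) • (A + B)) ((2⁻¹ : ℂ) • (A - B)) =
      (pm d 1 ⊗ₖ A).submatrix e e + (pm d (-1) ⊗ₖ B).submatrix e e by
    rw [hE]; exact h
  ext ⟨⟨i, o⟩, f⟩ ⟨⟨i', o'⟩, f'⟩
  simp only [sXZ, Matrix.of_apply, Matrix.add_apply, submatrix_apply, e, kroneckerMap_apply, pm,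
    Matrix.smul_apply, Matrix.sub_apply, Matrix.one_apply, Prod.swap, Prod.mk.injEq, id,
    smul_eq_mul]
  have hc : (f = i') ↔ (i' = f) := eq_comm
  push_cast
  split_ifs <;> first | ring1 | (exfalso; grind)

lemma sufficiency (d : ℕ) (hd : 2 ≤ d) (ψ : Fin d → ℂ) (hψ : star ψ ⬝ᵥ ψ = 1)
    (η : ℝ) (hη : 0 ≤ η) (h : η * ((d : ℝ) ^ 2 - 1) ≤ 2) :
    ∃ S : Matrix ((Fin d × Fin d) × Fin d) ((Fin d × Fin d) × Fin d) ℂ,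
        IsSuperchannel S ∧
        ∀ U : Matrix (Fin d) (Fin d) ℂ, U ∈ Matrix.specialUnitaryGroup (Fin d) ℂ →
          act S U =
            Uᴴ * ((η : ℂ) • outer ψ + (((1 - η) / d : ℝ) : ℂ) • (1 : Matrix (Fin d) (Fin d) ℂ)) * U := by
  have hd2 : (2 : ℝ) ≤ d := by exact_mod_cast hd
  have hd0 : (d : ℂ) ≠ 0 := by
    have : d ≠ 0 := by omega
    exact_mod_cast this
  have hd1 : (d : ℂ) - 1 ≠ 0 := by
    have : (d : ℝ) - 1 ≠ 0 := by linarith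
    exact_mod_cast this
  set Pm := outer (star ψ) with hP
  have hψ' : ψ ⬝ᵥ star ψ = 1 := by rw [dotProduct_comm]; exact hψ
  have hPpos : Pm.PosSemidef := posSemidef_vecMulVec_self_star _
  have hPP : Pm * Pm = Pm := by
    simp [hP, outer, vecMulVec_mul_vecMulVec, hψ']
  have hPH : Pmᴴ = Pm := hPpos.1
  have hPtr : Pm.trace = 1 := by
    simp [hP, outer, trace_vecMulVec, hψ]
  have hPT : Pmᵀ = outer ψ := by
    ext i j; simp [hP, outer, vecMulVec_apply, mul_comm]
  have hQpos : (1 - Pm).PosSemidef := by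
    have : (1 - Pm)ᴴ * (1 - Pm) = 1 - Pm := by
      rw [conjTranspose_sub, conjTranspose_one, hPH]
      simp [sub_mul, mul_sub, hPP]
    rw [← this]
    exact posSemidef_conjTranspose_mul_self _
  let a : ℝ := η * (d - 1) / d
  let g : ℝ := η * (d + 1) / d
  let b : ℝ := 2 / (d * (d - 1))
  have ha : 0 ≤ a := div_nonneg (mul_nonneg hη (by linarith)) (by linarith)
  have hg : 0 ≤ g := div_nonneg (mul_nonneg hη (by linarith)) (by linarith)
  have hbg : 0 ≤ b - g := by
    have : b - g = (2 - η * ((d : ℝ)^2 - 1)) / (d * (d - 1)) := by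
      have h1 : (d : ℝ) ≠ 0 := by linarith
      have h2 : (d : ℝ) - 1 ≠ 0 := by linarith
      simp only [b, g]
      field_simp
      ring
    rw [this]
    exact div_nonneg (by linarith) (mul_nonneg (by linarith) (by linarith))
  let A : Matrix (Fin d) (Fin d) ℂ := (a : ℂ) • Pm
  let B : Matrix (Fin d) (Fin d) ℂ := (g : ℂ) • (1 - Pm) + ((b - g : ℝ) : ℂ) • 1
  have hA : A.PosSemidef := hPpos.smul (by exact_mod_cast ha)
  have hB : B.PosSemidef :=
    (hQpos.smul (by exact_mod_cast hg)).add (PosSemidef.one.smul (by exact_mod_cast hbg))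
  refine ⟨sXZ ((2⁻¹ : ℂ) • (A + B)) ((2⁻¹ : ℂ) • (A - B)), ⟨sXZ_pos A B hA hB,
    ((d : ℂ)⁻¹) • 1, PosSemidef.one.smul (by positivity), ?_, ?_⟩, ?_⟩
  · simp [hd0]
  · rw [ptr_sXZ, smul_kronecker, ← kronecker_smul]
    congr 1
    simp only [A, B, a, g, b]
    push_cast
    match_scalars <;> field_simp <;> ring
  · intro U hU
    have hU1 := (Matrix.mem_specialUnitaryGroup_iff.1 hU).1
    have h1 := Matrix.mem_unitaryGroup_iff.1 hU1
    have h2 := Matrix.mem_unitaryGroup_iff'.1 hU1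
    rw [star_eq_conjTranspose] at h1 h2
    rw [act_sXZ _ _ _ h1]
    have e1 : ((2⁻¹ : ℂ) • (A + B)).trace = 2⁻¹ * (a + b * d - g) := by
      simp only [A, B, trace_smul, trace_add, trace_sub, hPtr, trace_one, Fintype.card_fin,
        smul_eq_mul]
      push_cast
      ring
    have e2 : ((2⁻¹ : ℂ) • (A - B))ᵀ = (2⁻¹ * (a + g) : ℂ) • outer ψ - (2⁻¹ * b : ℂ) • 1 := by
      simp only [A, B, transpose_smul, transpose_sub, transpose_add, hPT, transpose_one]
      push_cast
      module
    rw [e1, e2]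
    simp only [mul_sub, sub_mul, mul_add, add_mul, mul_smul_comm, smul_mul_assoc, mul_one, h2]
    simp only [a, g, b]
    push_cast
    match_scalars <;> field_simp <;> ring

/-- **Deterministic exact unitary inversion on a known mixed state.** With `ρ = η|ψ⟩⟨ψ| + ((1−η)/d)·1`, a single-call deterministic superchannel implementing `U ↦ U† ρ U` for all `U ∈ SU(d)` exists iff `η ≤ 2/(d²−1)`. -/
theorem mixed_state_deterministic_exact_inversion
    (d : ℕ) (hd : 2 ≤ d) (ψ : Fin d → ℂ) (hψ : star ψ ⬝ᵥ ψ = 1)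
    (η : ℝ) (hη : η ∈ Set.Icc (0 : ℝ) 1) :
    (∃ S : Matrix ((Fin d × Fin d) × Fin d) ((Fin d × Fin d) × Fin d) ℂ,
        IsSuperchannel S ∧
        ∀ U : Matrix (Fin d) (Fin d) ℂ, U ∈ Matrix.specialUnitaryGroup (Fin d) ℂ →
          act S U =
            Uᴴ * ((η : ℂ) • outer ψ + (((1 - η) / d : ℝ) : ℂ) • (1 : Matrix (Fin d) (Fin d) ℂ)) * U) ↔
      η ≤ 2 / ((d : ℝ) ^ 2 - 1) := by
  have hd2 : (2 : ℝ) ≤ d := by exact_mod_cast hd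
  have hpos : (0 : ℝ) < (d : ℝ) ^ 2 - 1 := by nlinarith
  rw [le_div_iff₀ hpos]
  constructor
  · rintro ⟨S, hS, h⟩
    exact necessity d hd ψ hψ η _ S hS h
  · intro h
    exact sufficiency d hd ψ hψ η hη.1 h
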